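/- arXiv:1503.08845 — 2 statements merged into one kernel-verified Lean document; each statement's English description precedes it below -/
import Mathlib

section
/- Let λ : Ω̄ → ℝ be smooth and strictly positive, and let G = diag(1, 1, λ), regarded as a metric independent of x3. Then the Riemann curvatures of G satisfy R_{1212} ≡ R_{1213} ≡ R_{1223} ≡ 0 on Ω and [[R_{1313}, R_{1323}], [R_{1323}, R_{2323}]] = −½ M_λ, where M_λ = ∇²λ − (1/(2λ)) ∇λ ⊗ ∇λ. Consequently, all six independent curvature components of G vanish identically on Ω if and only if M_λ ≡ 0 on Ω. -/
noncomputable section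

open scoped Topology ENNReal
open Filter MeasureTheory

/-- Points of the midplate `Ω ⊆ ℝ²`. -/
abbrev E2 : Type := Fin 2 → ℝ
/-- Vectors in `ℝ³`. -/
abbrev V3 : Type := Fin 3 → ℝ
/-- `3×3` real arrays. -/
abbrev M3 : Type := Fin 3 → Fin 3 → ℝ
/-- `2×2` real arrays. -/
abbrev M2 : Type := Fin 2 → Fin 2 → ℝ

/-- Partial derivative `∂ᵢ` of a scalar field on `ℝ²`. -/
def pd2 (i : Fin 2) (f : E2 → ℝ) (x : E2) : ℝ := fderiv ℝ f x (Pi.single i 1)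

/-- Partial derivative `∂ᵢ` of an `ℝ³`-valued field on `ℝ²`. -/
def pdv (i : Fin 2) (f : E2 → V3) (x : E2) : V3 := fderiv ℝ f x (Pi.single i 1)

/-- Euclidean inner product on `ℝ³`. -/
def dot3 (u v : V3) : ℝ := ∑ k, u k * v k

/-- Matrix product of `3×3` arrays. -/
def mmul (A B : M3) : M3 := fun i j => ∑ k, A i k * B k j

/-- Transpose of a `3×3` array. -/
def transp (A : M3) : M3 := fun i j => A j i

/-- The identity `3×3` array. -/
def idm : M3 := fun i j => if i = j then 1 else 0

/-- Frobenius norm of a `3×3` array. -/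
def fnorm (A : M3) : ℝ := Real.sqrt (∑ i, ∑ j, (A i j) ^ 2)

/-- Symmetry of a `3×3` array. -/
def SymM (A : M3) : Prop := ∀ i j, A i j = A j i

/-- Positive definiteness of a `3×3` array. -/
def PosDefM (A : M3) : Prop := ∀ v : V3, v ≠ 0 → 0 < ∑ i, ∑ j, v i * A i j * v j

/-- The special orthogonal group `SO(3)`. -/
def SO3 : Set M3 := {R | mmul (transp R) R = idm ∧ (Matrix.of R).det = 1}

/-- Entries of the inverse of a `3×3` array. -/
def minv (A : M3) : M3 := fun i j => (Matrix.of A)⁻¹ i j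

/-- The columns `∂₁y₀, ∂₂y₀, b₀` of the matrix `Q₀`. -/
def Qcol (y0 b0 : E2 → V3) (x : E2) : Fin 3 → V3 := ![pdv 0 y0 x, pdv 1 y0 x, b0 x]

/-- The determinant of `Q₀`. -/
def Qdet (y0 b0 : E2 → V3) (x : E2) : ℝ := (Matrix.of fun a j => Qcol y0 b0 x j a).det

/-- Partial derivatives `∂₁, ∂₂, ∂₃` of an `x₃`-independent scalar field (so `∂₃ = 0`). -/
def pd3 (k : Fin 3) (f : E2 → ℝ) (x : E2) : ℝ :=
  if h : (k : ℕ) < 2 then pd2 ⟨(k : ℕ), h⟩ f x else 0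

/-- Christoffel symbols `Γ^n_{kl}` of the (`x₃`-independent) metric `G`. -/
def Gamma (G : E2 → M3) (n k l : Fin 3) (x : E2) : ℝ :=
  (1 / 2) * ∑ s, minv (G x) n s *
    (pd3 k (fun y => G y s l) x + pd3 l (fun y => G y s k) x - pd3 s (fun y => G y k l) x)

/-- Covariant Riemann curvatures `R_{iklm}` of the (`x₃`-independent) metric `G`;
indices are `0`-based, so e.g. `R_{1313} = Riem G 0 2 0 2`. -/
def Riem (G : E2 → M3) (i k l m : Fin 3) (x : E2) : ℝ :=
  (1 / 2) * (pd3 k (fun y => pd3 l (fun z => G z i m) y) x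
           + pd3 i (fun y => pd3 m (fun z => G z k l) y) x
           - pd3 k (fun y => pd3 m (fun z => G z i l) y) x
           - pd3 i (fun y => pd3 l (fun z => G z k m) y) x)
    + ∑ n, ∑ p, G x n p *
        (Gamma G n k l x * Gamma G p i m x - Gamma G n k m x * Gamma G p i l x)

/-- The deformation gradient `∇u = [∂₁u | ∂₂u | ∂₃u]` of `u : Ω^h → ℝ³`. -/
def gradu (u : E2 × ℝ → V3) (x : E2 × ℝ) : M3 :=
  fun a j => ![fderiv ℝ u x (Pi.single 0 1, 0),
               fderiv ℝ u x (Pi.single 1 1, 0),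
               fderiv ℝ u x (0, 1)] j a

/-- The elastic energy `E^h(u) = (1/h) ∫_{Ω × (-h/2,h/2)} W(∇u A⁻¹)`. -/
def Eh (W : M3 → ℝ≥0∞) (A : E2 → M3) (Ω : Set E2) (h : ℝ) (u : E2 × ℝ → V3) : ℝ≥0∞ :=
  (ENNReal.ofReal h)⁻¹ *
    ∫⁻ x in Ω ×ˢ Set.Ioo (-(h / 2)) (h / 2), W (mmul (gradu u x) (minv (A x.1)))

/-- Symmetric part of a `3×3` array. -/
def symM (A : M3) : M3 := fun i j => (A i j + A j i) / 2
/-- Symmetric part of a `2×2` array. -/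
def sym2M (A : M2) : M2 := fun i j => (A i j + A j i) / 2
/-- `F₂*`: the `3×3` array with principal `2×2` minor `F₂` and all other entries `0`. -/
def put (F2 : M2) : M3 :=
  fun i j => if h : (i : ℕ) < 2 ∧ (j : ℕ) < 2 then F2 ⟨i, h.1⟩ ⟨j, h.2⟩ else 0
/-- The tensor product `c ⊗ e₃`. -/
def tene3 (c : V3) : M3 := fun i j => if j = 2 then c i else 0
/-- Cross product in `ℝ³`. -/
def cross (u v : V3) : V3 :=
  ![u 1 * v 2 - u 2 * v 1, u 2 * v 0 - u 0 * v 2, u 0 * v 1 - u 1 * v 0]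
/-- The quadratic form `Q₃(F) = D²W(Id₃)(F,F)`, for a density `w`. -/
def Q3d (w : M3 → ℝ) (F : M3) : ℝ := fderiv ℝ (fun P => fderiv ℝ w P F) idm F
/-- The reduced quadratic form `Q_{2,A}(x', F₂)`:
the infimum of `Q₃(A⁻¹ F̃ A⁻¹)` over all `F̃` whose principal `2×2` minor is `F₂`. -/
def QA (w : M3 → ℝ) (A : E2 → M3) (x : E2) (F2 : M2) : ℝ :=
  ⨅ Ft : {Ft : M3 // ∀ i j : Fin 2, Ft i.castSucc j.castSucc = F2 i j},
    Q3d w (mmul (minv (A x)) (mmul Ft.1 (minv (A x))))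

/-- The metric `diag(1, 1, λ)`. -/
def Gdiag (lam : E2 → ℝ) (x : E2) : M3 :=
  fun i j => if i = j then (if (i : ℕ) < 2 then 1 else lam x) else 0

/-!
With `λ = f²` the metric `diag(1, 1, λ)` is the warped product `dx₁² + dx₂² + f² dx₃²` over the flat
plane, so its curvature is carried by the planes containing `e₃`, where it is
`R_{i3j3} = -f ∂ᵢ∂ⱼf = -½ (M_λ)_{ij}`. In terms of `λ`: the symbols `Γ^n_{ij}` and `Γ^m_{i3}` with
`i, j, m ≤ 2` vanish, which leaves `R_{i3j3} = -½ ∂ᵢ∂ⱼλ + λ Γ^3_{i3} Γ^3_{j3}` with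
`Γ^3_{i3} = ∂ᵢλ / (2λ)`. Of the four entries of `M_λ`, the list of six curvatures sees only three;
the fourth is recovered from the symmetry of the Hessian.
-/

theorem pd3_castSucc (i : Fin 2) (f : E2 → ℝ) (x : E2) : pd3 i.castSucc f x = pd2 i f x :=
  dif_pos i.isLt

theorem pd3_two (f : E2 → ℝ) (x : E2) : pd3 2 f x = 0 :=
  dif_neg (lt_irrefl 2)

theorem pd3_const (k : Fin 3) (c : ℝ) (x : E2) : pd3 k (fun _ => c) x = 0 := by
  simp [pd3, pd2]

theorem pd2_pd2_eq_fderiv_fderiv {f : E2 → ℝ} {x : E2} (hf : DifferentiableAt ℝ (fderiv ℝ f) x)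
    (i j : Fin 2) :
    pd2 i (pd2 j f) x = fderiv ℝ (fderiv ℝ f) x (Pi.single i 1) (Pi.single j 1) := by
  change fderiv ℝ (fun y => fderiv ℝ f y (Pi.single j 1)) x (Pi.single i 1) = _
  simp [fderiv_clm_apply hf (differentiableAt_const _)]

theorem pd2_pd2_comm {f : E2 → ℝ} {x : E2} (hf : ContDiffAt ℝ 2 f x) (i j : Fin 2) :
    pd2 i (pd2 j f) x = pd2 j (pd2 i f) x := by
  have hdf : DifferentiableAt ℝ (fderiv ℝ f) x :=
    (hf.fderiv_right (m := 1) (by norm_num)).differentiableAt one_ne_zero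
  rw [pd2_pd2_eq_fderiv_fderiv hdf, pd2_pd2_eq_fderiv_fderiv hdf]
  exact (hf.isSymmSndFDerivAt (by simp)).eq _ _

theorem Gamma_comm {G : E2 → M3} {k l : Fin 3} (hG : ∀ y, G y k l = G y l k) (n : Fin 3) (x : E2) :
    Gamma G n k l x = Gamma G n l k x := by
  simp only [Gamma, hG, add_comm (pd3 k _ x)]

/-- The matrix `M_λ = ∇²λ - (1/(2λ)) ∇λ ⊗ ∇λ`, which measures the curvature of `diag(1, 1, λ)`.
It has the junk value `∇²λ` where `λ = 0`. -/
def warpingHessian (lam : E2 → ℝ) (x : E2) : M2 := fun i j =>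
  pd2 i (pd2 j lam) x - 1 / (2 * lam x) * (pd2 i lam x * pd2 j lam x)

theorem warpingHessian_comm {lam : E2 → ℝ} {x : E2} (hlam : ContDiffAt ℝ 2 lam x) (i j : Fin 2) :
    warpingHessian lam x i j = warpingHessian lam x j i := by
  simp only [warpingHessian, pd2_pd2_comm hlam i j, mul_comm (pd2 i lam x)]

theorem forall_warpingHessian_eq_zero_iff {lam : E2 → ℝ} {x : E2} (hlam : ContDiffAt ℝ 2 lam x) :
    (∀ i j, warpingHessian lam x i j = 0) ↔
      warpingHessian lam x 0 0 = 0 ∧ warpingHessian lam x 0 1 = 0 ∧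
        warpingHessian lam x 1 1 = 0 := by
  rw [Fin.forall_fin_two, Fin.forall_fin_two, Fin.forall_fin_two, warpingHessian_comm hlam 1 0]
  tauto

namespace Gdiag

section Entries

variable (lam : E2 → ℝ) (x : E2)

theorem comm (i j : Fin 3) : Gdiag lam x i j = Gdiag lam x j i := by
  rcases eq_or_ne i j with rfl | hij
  · rfl
  · simp only [Gdiag, if_neg hij, if_neg hij.symm]

theorem castSucc_left (i : Fin 2) (j : Fin 3) :
    Gdiag lam x i.castSucc j = if i.castSucc = j then 1 else 0 := by
  simp only [Gdiag, Fin.val_castSucc, i.isLt, if_true]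

theorem two_two : Gdiag lam x 2 2 = lam x := by
  simp [Gdiag]

theorem sum_two_mul (a : Fin 3 → ℝ) : ∑ s, Gdiag lam x 2 s * a s = lam x * a 2 := by
  simp [Gdiag]

theorem sum_castSucc_mul (i : Fin 2) (a : Fin 3 → ℝ) :
    ∑ s, Gdiag lam x i.castSucc s * a s = a i.castSucc := by
  simp only [castSucc_left, ite_mul, one_mul, zero_mul, Finset.sum_ite_eq, Finset.mem_univ, if_true]

theorem pd3_castSucc_left (k : Fin 3) (i : Fin 2) (j : Fin 3) :
    pd3 k (fun y => Gdiag lam y i.castSucc j) x = 0 := by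
  simp only [castSucc_left, pd3_const]

theorem pd3_castSucc_right (k i : Fin 3) (j : Fin 2) :
    pd3 k (fun y => Gdiag lam y i j.castSucc) x = 0 := by
  simp only [comm lam _ i, pd3_castSucc_left]

variable {lam x} in
theorem minv_eq (hx : lam x ≠ 0) : minv (Gdiag lam x) = Gdiag lam⁻¹ x := by
  have hinv : (Matrix.of (Gdiag lam x))⁻¹ = Matrix.of (Gdiag lam⁻¹ x) := by
    refine Matrix.inv_eq_right_inv ?_
    ext i j
    fin_cases i <;> fin_cases j <;> simp [Matrix.mul_apply, Gdiag, hx]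
  funext i j
  rw [minv, hinv, Matrix.of_apply]

end Entries

section Curvature

variable (lam : E2 → ℝ) (x : E2)

theorem Gamma_tangential (n : Fin 3) (i j : Fin 2) :
    Gamma (Gdiag lam) n i.castSucc j.castSucc x = 0 := by
  simp [Gamma, pd3_castSucc_right]

theorem Riem_tangential (i k l m : Fin 2) :
    Riem (Gdiag lam) i.castSucc k.castSucc l.castSucc m.castSucc x = 0 := by
  simp [Riem, pd3_castSucc_right, pd3_const, Gamma_tangential]

theorem Riem_mixed (i k l : Fin 2) :
    Riem (Gdiag lam) i.castSucc k.castSucc l.castSucc 2 x = 0 := by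
  simp [Riem, pd3_castSucc_left, pd3_const, Gamma_tangential]

variable {lam x}

theorem Gamma_castSucc_castSucc_two (hx : lam x ≠ 0) (m i : Fin 2) :
    Gamma (Gdiag lam) m.castSucc i.castSucc 2 x = 0 := by
  simp only [Gamma, minv_eq hx, sum_castSucc_mul, pd3_castSucc_left, pd3_castSucc_right]
  norm_num

theorem Gamma_two_castSucc_two (hx : lam x ≠ 0) (i : Fin 2) :
    Gamma (Gdiag lam) 2 i.castSucc 2 x = pd2 i lam x / (2 * lam x) := by
  simp only [Gamma, minv_eq hx, sum_two_mul, two_two, pd3_two, pd3_castSucc, Pi.inv_apply]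
  ring

theorem Riem_normal_eq_Gamma (hx : lam x ≠ 0) (i j : Fin 2) :
    Riem (Gdiag lam) i.castSucc 2 j.castSucc 2 x =
      -(1 / 2) * pd2 i (pd2 j lam) x +
        lam x * (Gamma (Gdiag lam) 2 i.castSucc 2 x * Gamma (Gdiag lam) 2 j.castSucc 2 x) := by
  have Gamma_swap (n : Fin 3) :
      Gamma (Gdiag lam) n 2 j.castSucc x = Gamma (Gdiag lam) n j.castSucc 2 x :=
    Gamma_comm (fun y => comm lam y _ _) n x
  have christoffel_part :
      ∑ n, ∑ p, Gdiag lam x n p *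
          (Gamma (Gdiag lam) n 2 j.castSucc x * Gamma (Gdiag lam) p i.castSucc 2 x -
            Gamma (Gdiag lam) n 2 2 x * Gamma (Gdiag lam) p i.castSucc j.castSucc x) =
        lam x * (Gamma (Gdiag lam) 2 i.castSucc 2 x * Gamma (Gdiag lam) 2 j.castSucc 2 x) := by
    simp only [Gamma_swap, Gamma_tangential, mul_zero, sub_zero]
    rw [Fin.sum_univ_castSucc]
    simp only [Fin.reduceLast, sum_castSucc_mul, sum_two_mul, Gamma_castSucc_castSucc_two hx,
      zero_mul, Finset.sum_const_zero, zero_add]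
    ring
  rw [Riem, christoffel_part]
  simp only [pd3_castSucc, pd3_castSucc_left, pd3_castSucc_right, pd3_const, two_two]
  ring

theorem Riem_normal (hx : lam x ≠ 0) (i j : Fin 2) :
    Riem (Gdiag lam) i.castSucc 2 j.castSucc 2 x = -(1 / 2) * warpingHessian lam x i j := by
  rw [Riem_normal_eq_Gamma hx, Gamma_two_castSucc_two hx, Gamma_two_castSucc_two hx,
    warpingHessian]
  field_simp
  ring

theorem Riem_normal_eq_zero_iff (hx : lam x ≠ 0) (i j : Fin 2) :
    Riem (Gdiag lam) i.castSucc 2 j.castSucc 2 x = 0 ↔ warpingHessian lam x i j = 0 := by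
  simp [Riem_normal hx]

end Curvature

end Gdiag

theorem stmt17_general {Ω : Set E2} {lam : E2 → ℝ} (hlam : ∀ x ∈ Ω, ContDiffAt ℝ 2 lam x)
    (hne : ∀ x ∈ Ω, lam x ≠ 0) :
    (∀ x ∈ Ω,
      Riem (Gdiag lam) 0 1 0 1 x = 0 ∧
      Riem (Gdiag lam) 0 1 0 2 x = 0 ∧
      Riem (Gdiag lam) 0 1 1 2 x = 0 ∧
      (∀ i j : Fin 2,
        Riem (Gdiag lam) i.castSucc 2 j.castSucc 2 x = -(1 / 2) * warpingHessian lam x i j)) ∧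
    ((∀ x ∈ Ω,
        Riem (Gdiag lam) 0 1 0 1 x = 0 ∧ Riem (Gdiag lam) 0 1 0 2 x = 0 ∧
        Riem (Gdiag lam) 0 1 1 2 x = 0 ∧ Riem (Gdiag lam) 0 2 0 2 x = 0 ∧
        Riem (Gdiag lam) 0 2 1 2 x = 0 ∧ Riem (Gdiag lam) 1 2 1 2 x = 0) ↔
      ∀ x ∈ Ω, ∀ i j : Fin 2, warpingHessian lam x i j = 0) := by
  have h1212 (x : E2) : Riem (Gdiag lam) 0 1 0 1 x = 0 := Gdiag.Riem_tangential lam x 0 1 0 1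
  have h1213 (x : E2) : Riem (Gdiag lam) 0 1 0 2 x = 0 := Gdiag.Riem_mixed lam x 0 1 0
  have h1223 (x : E2) : Riem (Gdiag lam) 0 1 1 2 x = 0 := Gdiag.Riem_mixed lam x 0 1 1
  refine ⟨fun x hx => ⟨h1212 x, h1213 x, h1223 x, Gdiag.Riem_normal (hne x hx)⟩,
    forall₂_congr fun x hx => ?_⟩
  have h1313 : Riem (Gdiag lam) 0 2 0 2 x = 0 ↔ warpingHessian lam x 0 0 = 0 :=
    Gdiag.Riem_normal_eq_zero_iff (hne x hx) 0 0
  have h1323 : Riem (Gdiag lam) 0 2 1 2 x = 0 ↔ warpingHessian lam x 0 1 = 0 :=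
    Gdiag.Riem_normal_eq_zero_iff (hne x hx) 0 1
  have h2323 : Riem (Gdiag lam) 1 2 1 2 x = 0 ↔ warpingHessian lam x 1 1 = 0 :=
    Gdiag.Riem_normal_eq_zero_iff (hne x hx) 1 1
  simp only [h1212, h1213, h1223, h1313, h1323, h2323, true_and,
    forall_warpingHessian_eq_zero_iff (hlam x hx)]

/-- For `G = diag(1,1,λ)`: `R₁₂₁₂ ≡ R₁₂₁₃ ≡ R₁₂₂₃ ≡ 0` on `Ω`,
`[[R₁₃₁₃, R₁₃₂₃], [R₁₃₂₃, R₂₃₂₃]] = -½ M_λ` with `M_λ = ∇²λ - (1/2λ) ∇λ ⊗ ∇λ`, and hence all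
six independent curvatures of `G` vanish identically on `Ω` iff `M_λ ≡ 0` on `Ω`. -/
theorem stmt17
    (Ω : Set E2) (hΩo : IsOpen Ω) (hΩb : Bornology.IsBounded Ω)
    (hΩsc : SimplyConnectedSpace ↥Ω)
    (lam : E2 → ℝ) (hlamsm : ContDiffOn ℝ (⊤ : ℕ∞) lam (closure Ω))
    (hlampos : ∀ x ∈ closure Ω, 0 < lam x) :
    (∀ x ∈ Ω,
      Riem (Gdiag lam) 0 1 0 1 x = 0 ∧
      Riem (Gdiag lam) 0 1 0 2 x = 0 ∧
      Riem (Gdiag lam) 0 1 1 2 x = 0 ∧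
      (∀ i j : Fin 2,
        Riem (Gdiag lam) i.castSucc 2 j.castSucc 2 x =
          -(1 / 2) * (pd2 i (fun y => pd2 j lam y) x -
            1 / (2 * lam x) * (pd2 i lam x * pd2 j lam x)))) ∧
    ((∀ x ∈ Ω,
        Riem (Gdiag lam) 0 1 0 1 x = 0 ∧ Riem (Gdiag lam) 0 1 0 2 x = 0 ∧
        Riem (Gdiag lam) 0 1 1 2 x = 0 ∧ Riem (Gdiag lam) 0 2 0 2 x = 0 ∧
        Riem (Gdiag lam) 0 2 1 2 x = 0 ∧ Riem (Gdiag lam) 1 2 1 2 x = 0) ↔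
      (∀ x ∈ Ω, ∀ i j : Fin 2,
        pd2 i (fun y => pd2 j lam y) x -
          1 / (2 * lam x) * (pd2 i lam x * pd2 j lam x) = 0)) := by
  have hlam (x : E2) (hx : x ∈ Ω) : ContDiffAt ℝ 2 lam x :=
    ((hlamsm.mono subset_closure).contDiffAt (hΩo.mem_nhds hx)).of_le
      (WithTop.coe_le_coe.2 (le_top : (2 : ℕ∞) ≤ ⊤))
  exact stmt17_general hlam fun x hx => (hlampos x (subset_closure hx)).ne'
end
end

section
/- Let λ : Ω̄ → ℝ be smooth and strictly positive, set f = ½ log λ, and let G = λ Id₃. Suppose φ : Ω̄ → ℝ² is a smooth conformal immersion with (∇φ)ᵀ∇φ = λ Id₂, and let y0 = (φ, 0) : Ω̄ → ℝ³. Then y0 satisfies (∇y0)ᵀ∇y0 = G_{2×2} and sym((∇y0)ᵀ ∇b0) = 0 with b0 = √λ e₃; the associated field d0 equals d0 = −(∂1 f · ∂1 y0 + ∂2 f · ∂2 y0); moreover (∇b0)ᵀ∇b0 = e^{2f} ∇f ⊗ ∇f, the matrix (∇y0)ᵀ∇d0 is symmetric and equals −e^{2f} (∇²f + |∇f|² Id₂),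 and hence sym((∇y0)ᵀ ∇d0) + (∇b0)ᵀ∇b0 = −e^{2f} (∇²f − ∇f ⊗ ∇f + |∇f|² Id₂). -/
noncomputable section

open scoped Topology ENNReal
open Filter MeasureTheory

/-- The conformal metric `λ Id₃`. -/
def Gconf (lam : E2 → ℝ) (x : E2) : M3 := fun i j => if i = j then lam x else 0
/-- The immersion `y₀ = (φ, 0)`. -/
def y0conf (phi : E2 → E2) (x : E2) : V3 := ![phi x 0, phi x 1, 0]
/-- The Cosserat field `b₀ = √λ e₃`. -/
def b0conf (lam : E2 → ℝ) (x : E2) : V3 := Real.sqrt (lam x) • ![0, 0, (1 : ℝ)]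
/-- `f = ½ log λ`. -/
def flog (lam : E2 → ℝ) (x : E2) : ℝ := (1 / 2) * Real.log (lam x)
/-- The field `d₀ = -(∂₁f ∂₁y₀ + ∂₂f ∂₂y₀)`. -/
def d0conf (lam : E2 → ℝ) (phi : E2 → E2) (x : E2) : V3 :=
  -(pd2 0 (flog lam) x • pdv 0 (y0conf phi) x + pd2 1 (flog lam) x • pdv 1 (y0conf phi) x)

/-!
Write the conformality of `y₀` as `⟨∂ᵢy₀, ∂ⱼy₀⟩ = e^{2f} δᵢⱼ`. Then `d₀` is minus the field
`X = ∑ₖ ∂ₖf ∂ₖy₀`, and conformality gives `⟨∂ᵢy₀, X⟩ = e^{2f} ∂ᵢf`. Differentiating this along `∂ⱼ`,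
`⟨∂ᵢy₀, ∂ⱼX⟩ = e^{2f} (∂ⱼ∂ᵢf + 2 ∂ᵢf ∂ⱼf) - ∑ₖ ∂ₖf ⟨∂ₖy₀, ∂ⱼ∂ᵢy₀⟩`, and the Koszul formula
`⟨∂ₖy₀, ∂ⱼ∂ᵢy₀⟩ = e^{2f} (∂ⱼf δₖᵢ + ∂ᵢf δₖⱼ - ∂ₖf δⱼᵢ)` turns the last sum into
`e^{2f} (2 ∂ᵢf ∂ⱼf - |∇f|² δᵢⱼ)`. This argument holds for conformal immersions into any space with a
symmetric bilinear form; planarity of `y₀` only enters in the orthogonality to `b₀ = e^f e₃`.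
-/

section ConformalMaps

variable {E F : Type*} [NormedAddCommGroup E] [NormedSpace ℝ E]
  [NormedAddCommGroup F] [NormedSpace ℝ F] {f : E → F} {x : E}

theorem differentiableAt_fderiv (hf : ContDiffAt ℝ 2 f x) :
    DifferentiableAt ℝ (fderiv ℝ f) x :=
  (hf.fderiv_right (m := 1) (by norm_num)).differentiableAt one_ne_zero

theorem fderiv_fderiv_apply (hf : ContDiffAt ℝ 2 f x) (v w : E) :
    fderiv ℝ (fun y => fderiv ℝ f y w) x v = fderiv ℝ (fderiv ℝ f) x v w := by
  simp [fderiv_clm_apply (differentiableAt_fderiv hf) (differentiableAt_const w)]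

theorem fderiv_fderiv_comm (hf : ContDiffAt ℝ 2 f x) (v w : E) :
    fderiv ℝ (fderiv ℝ f) x v w = fderiv ℝ (fderiv ℝ f) x w v :=
  (hf.isSymmSndFDerivAt (by simp)).eq v w

variable {B : F →L[ℝ] F →L[ℝ] ℝ}

theorem fderiv_bilin_fderiv_apply (hf : ContDiffAt ℝ 2 f x) (u v w : E) :
    fderiv ℝ (fun y => B (fderiv ℝ f y u) (fderiv ℝ f y w)) x v =
      B (fderiv ℝ f x u) (fderiv ℝ (fderiv ℝ f) x v w) +
        B (fderiv ℝ (fderiv ℝ f) x v u) (fderiv ℝ f x w) := by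
  have hD (z : E) : DifferentiableAt ℝ (fun y => fderiv ℝ f y z) x :=
    (differentiableAt_fderiv hf).clm_apply (differentiableAt_const z)
  simp [B.fderiv_of_bilinear (hD u) (hD w), fderiv_fderiv_apply hf]

theorem koszul_formula (hB : ∀ a b, B a b = B b a) (hf : ContDiffAt ℝ 2 f x) (u v w : E) :
    2 * B (fderiv ℝ f x u) (fderiv ℝ (fderiv ℝ f) x v w) =
      fderiv ℝ (fun y => B (fderiv ℝ f y u) (fderiv ℝ f y w)) x v +
        fderiv ℝ (fun y => B (fderiv ℝ f y u) (fderiv ℝ f y v)) x w -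
        fderiv ℝ (fun y => B (fderiv ℝ f y v) (fderiv ℝ f y w)) x u := by
  simp only [fderiv_bilin_fderiv_apply hf]
  rw [fderiv_fderiv_comm hf w v, fderiv_fderiv_comm hf u v, fderiv_fderiv_comm hf w u,
    hB (fderiv ℝ (fderiv ℝ f) x v u), hB (fderiv ℝ (fderiv ℝ f) x u w)]
  ring

variable {ι : Type*} {e : ι → E} {g : E → ℝ}

section PushforwardGradient

variable [Fintype ι]

/-- The field `∑ₖ ∂ₖg ∂ₖf` along `f`, i.e. the image under the derivative of `f` of the gradient of
`g` in a frame `e` regarded as orthonormal; for the standard frame of the plane it is `-d₀`. -/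
def pushforwardGradient (e : ι → E) (g : E → ℝ) (f : E → F) (x : E) : F :=
  ∑ k, fderiv ℝ g x (e k) • fderiv ℝ f x (e k)

theorem differentiableAt_pushforwardGradient (hf : ContDiffAt ℝ 2 f x) (hg : ContDiffAt ℝ 2 g x) :
    DifferentiableAt ℝ (pushforwardGradient e g f) x :=
  DifferentiableAt.fun_sum fun k _ =>
    ((differentiableAt_fderiv hg).clm_apply (differentiableAt_const (e k))).fun_smul
      ((differentiableAt_fderiv hf).clm_apply (differentiableAt_const (e k)))

end PushforwardGradient

variable [DecidableEq ι]

/-- Conformality at `x` of a map `f` along a family `e` of directions, for the form `B` on the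
target: the derivatives of `f` along `e` are `B`-orthogonal, of common square length `e^{2g}`.
The conformal factor is encoded by its half logarithm `g`, as in the paper's `λ = e^{2f}`. -/
def IsConformalAlong (B : F →L[ℝ] F →L[ℝ] ℝ) (e : ι → E) (g : E → ℝ) (f : E → F) (x : E) : Prop :=
  ∀ i j, B (fderiv ℝ f x (e i)) (fderiv ℝ f x (e j)) = if i = j then Real.exp (2 * g x) else 0

theorem koszul_formula_of_isConformalAlong (hB : ∀ a b, B a b = B b a)
    (hf : ContDiffAt ℝ 2 f x) (hg : DifferentiableAt ℝ g x)
    (hconf : ∀ᶠ y in 𝓝 x, IsConformalAlong B e g f y) (k i j : ι) :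
    B (fderiv ℝ f x (e k)) (fderiv ℝ (fderiv ℝ f) x (e j) (e i)) =
      Real.exp (2 * g x) * ((if k = i then fderiv ℝ g x (e j) else 0) +
        (if k = j then fderiv ℝ g x (e i) else 0) -
        (if j = i then fderiv ℝ g x (e k) else 0)) := by
  have hmetric (a b : ι) (v : E) :
      fderiv ℝ (fun y => B (fderiv ℝ f y (e a)) (fderiv ℝ f y (e b))) x v =
        if a = b then 2 * Real.exp (2 * g x) * fderiv ℝ g x v else 0 := by
    rw [Filter.EventuallyEq.fderiv_eq (hconf.mono fun y hy => hy a b)]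
    split_ifs
    · rw [(hg.hasFDerivAt.const_mul 2).exp.fderiv]
      simp only [smul_apply, smul_eq_mul]
      ring
    · simp
  have hkoszul := koszul_formula hB hf (e k) (e j) (e i)
  rw [hmetric, hmetric, hmetric] at hkoszul
  split_ifs at hkoszul ⊢ <;> linarith

variable [Fintype ι]

theorem IsConformalAlong.bilin_fderiv_pushforwardGradient (h : IsConformalAlong B e g f x)
    (i : ι) :
    B (fderiv ℝ f x (e i)) (pushforwardGradient e g f x) =
      Real.exp (2 * g x) * fderiv ℝ g x (e i) := by
  simp [pushforwardGradient, h i _, mul_comm]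

theorem bilin_pushforwardGradient_fderiv_fderiv (hB : ∀ a b, B a b = B b a)
    (hf : ContDiffAt ℝ 2 f x) (hg : DifferentiableAt ℝ g x)
    (hconf : ∀ᶠ y in 𝓝 x, IsConformalAlong B e g f y) (i j : ι) :
    B (pushforwardGradient e g f x) (fderiv ℝ (fderiv ℝ f) x (e j) (e i)) =
      Real.exp (2 * g x) * (2 * (fderiv ℝ g x (e i) * fderiv ℝ g x (e j)) -
        (∑ k, fderiv ℝ g x (e k) ^ 2) * if i = j then 1 else 0) := by
  have hterm (k : ι) :
      fderiv ℝ g x (e k) * B (fderiv ℝ f x (e k)) (fderiv ℝ (fderiv ℝ f) x (e j) (e i)) =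
        Real.exp (2 * g x) * ((if k = i then fderiv ℝ g x (e i) * fderiv ℝ g x (e j) else 0) +
          (if k = j then fderiv ℝ g x (e i) * fderiv ℝ g x (e j) else 0) -
          fderiv ℝ g x (e k) ^ 2 * if i = j then 1 else 0) := by
    rw [koszul_formula_of_isConformalAlong hB hf hg hconf]
    grind
  simp only [pushforwardGradient, map_sum, map_smul, sum_apply, smul_apply, smul_eq_mul, hterm,
    ← Finset.mul_sum, Finset.sum_sub_distrib, Finset.sum_add_distrib, ← Finset.sum_mul,
    Finset.sum_ite_eq', Finset.mem_univ, if_true]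
  ring

theorem bilin_fderiv_fderiv_pushforwardGradient (hB : ∀ a b, B a b = B b a)
    (hf : ContDiffAt ℝ 2 f x) (hg : ContDiffAt ℝ 2 g x)
    (hconf : ∀ᶠ y in 𝓝 x, IsConformalAlong B e g f y) (i j : ι) :
    B (fderiv ℝ f x (e i)) (fderiv ℝ (pushforwardGradient e g f) x (e j)) =
      Real.exp (2 * g x) * (fderiv ℝ (fderiv ℝ g) x (e j) (e i) +
        (∑ k, fderiv ℝ g x (e k) ^ 2) * if i = j then 1 else 0) := by
  have hgd : DifferentiableAt ℝ g x := hg.differentiableAt two_ne_zero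
  have hleft : fderiv ℝ (fun y => B (fderiv ℝ f y (e i)) (pushforwardGradient e g f y)) x (e j) =
      B (fderiv ℝ f x (e i)) (fderiv ℝ (pushforwardGradient e g f) x (e j)) +
        B (fderiv ℝ (fderiv ℝ f) x (e j) (e i)) (pushforwardGradient e g f x) := by
    rw [B.fderiv_of_bilinear
      ((differentiableAt_fderiv hf).clm_apply (differentiableAt_const (e i)))
      (differentiableAt_pushforwardGradient hf hg)]
    simp [fderiv_fderiv_apply hf]
  have hright : fderiv ℝ (fun y => Real.exp (2 * g y) * fderiv ℝ g y (e i)) x (e j) =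
      Real.exp (2 * g x) * (fderiv ℝ (fderiv ℝ g) x (e j) (e i) +
        2 * (fderiv ℝ g x (e i) * fderiv ℝ g x (e j))) := by
    rw [fderiv_fun_mul (hgd.const_mul 2).exp
      ((differentiableAt_fderiv hg).clm_apply (differentiableAt_const (e i))),
      (hgd.hasFDerivAt.const_mul 2).exp.fderiv]
    simp only [add_apply, smul_apply, smul_eq_mul, fderiv_fderiv_apply hg]
    ring
  rw [Filter.EventuallyEq.fderiv_eq
    (hconf.mono fun y hy => hy.bilin_fderiv_pushforwardGradient i), hright,
    hB _ (pushforwardGradient e g f x),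
    bilin_pushforwardGradient_fderiv_fderiv hB hf hgd hconf i j] at hleft
  linarith

end ConformalMaps

section Frame

/-- The Euclidean inner product `dot3` of `ℝ³` as a continuous bilinear map; the norm of `V3` is
the supremum norm, so it is not an `inner`. -/
def dot3L : V3 →L[ℝ] V3 →L[ℝ] ℝ :=
  (dotProductBilin ℝ ℝ).toContinuousBilinearMap

theorem dot3L_apply (u v : V3) : dot3L u v = dot3 u v := rfl

theorem dot3L_comm (u v : V3) : dot3L u v = dot3L v u := dotProduct_comm u v

/-- The standard frame `e₁, e₂` of `ℝ²`, so that `pd2 i` and `pdv i` differentiate along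
`stdFrame i`. -/
def stdFrame (i : Fin 2) : E2 := Pi.single i 1

/-- The embedding `v ↦ (v, 0)` of `ℝ²` as a plane in `ℝ³`, through which `y₀ = (φ, 0)` factors. -/
def planeInclusion : E2 →L[ℝ] V3 :=
  ContinuousLinearMap.pi ![ContinuousLinearMap.proj 0, ContinuousLinearMap.proj 1, 0]

theorem planeInclusion_apply (v : E2) : planeInclusion v = ![v 0, v 1, 0] := by
  ext k
  fin_cases k <;> rfl

theorem dot3_planeInclusion (v w : E2) :
    dot3 (planeInclusion v) (planeInclusion w) = ∑ k, v k * w k := by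
  simp [planeInclusion_apply, dot3, Fin.sum_univ_three]

theorem dot3_planeInclusion_e3 (v : E2) : dot3 (planeInclusion v) ![0, 0, 1] = 0 := by
  simp [planeInclusion_apply, dot3, Fin.sum_univ_three]

theorem Qcol_castSucc (y0 b0 : E2 → V3) (x : E2) (i : Fin 2) :
    Qcol y0 b0 x i.castSucc = pdv i y0 x := by
  fin_cases i <;> rfl

theorem pd2_pd2 {g : E2 → ℝ} {x : E2} (hg : ContDiffAt ℝ 2 g x) (i j : Fin 2) :
    pd2 i (fun y => pd2 j g y) x = fderiv ℝ (fderiv ℝ g) x (stdFrame i) (stdFrame j) :=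
  fderiv_fderiv_apply hg (stdFrame i) (stdFrame j)

theorem pd2_comm {g : E2 → ℝ} {x : E2} (hg : ContDiffAt ℝ 2 g x) (i j : Fin 2) :
    pd2 i (fun y => pd2 j g y) x = pd2 j (fun y => pd2 i g y) x := by
  rw [pd2_pd2 hg, pd2_pd2 hg, fderiv_fderiv_comm hg]

end Frame

section CosseratFields

variable {lam : E2 → ℝ} {phi : E2 → E2} {x : E2}

theorem exp_two_mul_flog (hx : 0 < lam x) : Real.exp (2 * flog lam x) = lam x := by
  rw [flog, ← mul_assoc, mul_one_div_cancel two_ne_zero, one_mul, Real.exp_log hx]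

theorem exp_flog (hx : 0 < lam x) : Real.exp (flog lam x) = Real.sqrt (lam x) := by
  rw [flog, one_div_mul_eq_div, Real.exp_half, Real.exp_log hx]

theorem contDiffAt_flog {n : WithTop ℕ∞} (h : ContDiffAt ℝ n lam x) (hx : 0 < lam x) :
    ContDiffAt ℝ n (flog lam) x :=
  contDiffAt_const.mul (h.log hx.ne')

theorem pdv_b0conf (h : DifferentiableAt ℝ lam x) (hx : 0 < lam x) (i : Fin 2) :
    pdv i (b0conf lam) x = (Real.exp (flog lam x) * pd2 i (flog lam) x) • ![0, 0, 1] := by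
  have hb : b0conf lam =ᶠ[𝓝 x] fun y => Real.exp (flog lam y) • ![0, 0, 1] := by
    filter_upwards [h.continuousAt.eventually_const_lt hx] with y hy
    rw [exp_flog hy, b0conf]
  have hf : DifferentiableAt ℝ (flog lam) x := (h.log hx.ne').const_mul (1 / 2)
  rw [pdv, hb.fderiv_eq, (hf.hasFDerivAt.exp.smul_const _).fderiv]
  rfl

theorem dot3_pdv_b0conf (h : DifferentiableAt ℝ lam x) (hx : 0 < lam x) (i : Fin 2) :
    dot3 (pdv i (b0conf lam) x) (b0conf lam x) =
      Real.exp (2 * flog lam x) * pd2 i (flog lam) x := by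
  rw [pdv_b0conf h hx, b0conf, ← exp_flog hx, two_mul, Real.exp_add]
  simp only [dot3, Fin.sum_univ_three, Pi.smul_apply, smul_eq_mul, Matrix.cons_val]
  ring

theorem dot3_pdv_b0conf_pdv_b0conf (h : DifferentiableAt ℝ lam x) (hx : 0 < lam x) (i j : Fin 2) :
    dot3 (pdv i (b0conf lam) x) (pdv j (b0conf lam) x) =
      Real.exp (2 * flog lam x) * (pd2 i (flog lam) x * pd2 j (flog lam) x) := by
  rw [pdv_b0conf h hx, pdv_b0conf h hx, two_mul, Real.exp_add]
  simp only [dot3, Fin.sum_univ_three, Pi.smul_apply, smul_eq_mul, Matrix.cons_val]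
  ring

theorem y0conf_eq_planeInclusion_comp : y0conf phi = planeInclusion ∘ phi :=
  funext fun y => (planeInclusion_apply (phi y)).symm

theorem contDiffAt_y0conf {n : WithTop ℕ∞} (h : ContDiffAt ℝ n phi x) :
    ContDiffAt ℝ n (y0conf phi) x :=
  y0conf_eq_planeInclusion_comp ▸ planeInclusion.contDiff.contDiffAt.comp x h

theorem pdv_y0conf (h : DifferentiableAt ℝ phi x) (i : Fin 2) :
    pdv i (y0conf phi) x = planeInclusion (fderiv ℝ phi x (Pi.single i 1)) := by
  rw [pdv, y0conf_eq_planeInclusion_comp, fderiv_comp x planeInclusion.differentiableAt h,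
    ContinuousLinearMap.fderiv, ContinuousLinearMap.comp_apply]

theorem isConformalAlong_y0conf (h : DifferentiableAt ℝ phi x) (hx : 0 < lam x)
    (hconf : ∀ i j : Fin 2,
      (∑ k : Fin 2, fderiv ℝ phi x (Pi.single i 1) k * fderiv ℝ phi x (Pi.single j 1) k) =
        if i = j then lam x else 0) :
    IsConformalAlong dot3L stdFrame (flog lam) (y0conf phi) x := fun i j => by
  rw [exp_two_mul_flog hx, ← hconf i j, ← dot3_planeInclusion, ← pdv_y0conf h, ← pdv_y0conf h]
  rfl

theorem dot3_pdv_y0conf_e3 (h : DifferentiableAt ℝ phi x) (i : Fin 2) :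
    dot3 (pdv i (y0conf phi) x) ![0, 0, 1] = 0 := by
  rw [pdv_y0conf h, dot3_planeInclusion_e3]

theorem dot3_pdv_y0conf_pdv_b0conf (hphi : DifferentiableAt ℝ phi x)
    (hlam : DifferentiableAt ℝ lam x) (hx : 0 < lam x) (i j : Fin 2) :
    dot3 (pdv i (y0conf phi) x) (pdv j (b0conf lam) x) = 0 := by
  rw [pdv_b0conf hlam hx, ← dot3L_apply, map_smul, dot3L_apply, dot3_pdv_y0conf_e3 hphi, smul_zero]

theorem d0conf_eq_neg_pushforwardGradient :
    d0conf lam phi = -pushforwardGradient stdFrame (flog lam) (y0conf phi) := by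
  ext1 y
  rw [Pi.neg_apply, pushforwardGradient, Fin.sum_univ_two]
  rfl

theorem dot3_b0conf_d0conf (h : DifferentiableAt ℝ phi x) :
    dot3 (b0conf lam x) (d0conf lam phi x) = 0 := by
  have he3 (i : Fin 2) : dot3L (pdv i (y0conf phi) x) ![0, 0, 1] = 0 := dot3_pdv_y0conf_e3 h i
  rw [← dot3L_apply, dot3L_comm, b0conf, map_smul, d0conf]
  simp only [map_neg, map_add, map_smul, neg_apply, add_apply, smul_apply, he3, smul_zero,
    add_zero, neg_zero]

theorem dot3_pdv_y0conf_d0conf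
    (hconf : IsConformalAlong dot3L stdFrame (flog lam) (y0conf phi) x) (i : Fin 2) :
    dot3 (pdv i (y0conf phi) x) (d0conf lam phi x) =
      -(Real.exp (2 * flog lam x) * pd2 i (flog lam) x) := by
  rw [d0conf_eq_neg_pushforwardGradient, Pi.neg_apply, ← dot3L_apply, map_neg]
  exact congrArg Neg.neg (hconf.bilin_fderiv_pushforwardGradient i)

theorem dot3_pdv_y0conf_pdv_d0conf (hphi : ContDiffAt ℝ 2 phi x)
    (hf : ContDiffAt ℝ 2 (flog lam) x)
    (hconf : ∀ᶠ y in 𝓝 x, IsConformalAlong dot3L stdFrame (flog lam) (y0conf phi) y)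
    (i j : Fin 2) :
    dot3 (pdv i (y0conf phi) x) (pdv j (d0conf lam phi) x) =
      -(Real.exp (2 * flog lam x)) *
        (pd2 i (fun y => pd2 j (flog lam) y) x +
          ((pd2 0 (flog lam) x) ^ 2 + (pd2 1 (flog lam) x) ^ 2) *
            (if i = j then 1 else 0)) := by
  have h := bilin_fderiv_fderiv_pushforwardGradient dot3L_comm (contDiffAt_y0conf hphi) hf hconf i j
  rw [Fin.sum_univ_two, ← pd2_pd2 hf, pd2_comm hf] at h
  rw [d0conf_eq_neg_pushforwardGradient, pdv.eq_def j, fderiv_neg, neg_apply, ← dot3L_apply,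
    map_neg, neg_mul]
  exact congrArg Neg.neg h

theorem dot3_pdv_y0conf_pdv_d0conf_comm (hphi : ContDiffAt ℝ 2 phi x)
    (hf : ContDiffAt ℝ 2 (flog lam) x)
    (hconf : ∀ᶠ y in 𝓝 x, IsConformalAlong dot3L stdFrame (flog lam) (y0conf phi) y)
    (i j : Fin 2) :
    dot3 (pdv i (y0conf phi) x) (pdv j (d0conf lam phi) x) =
      dot3 (pdv j (y0conf phi) x) (pdv i (d0conf lam phi) x) := by
  simp only [dot3_pdv_y0conf_pdv_d0conf hphi hf hconf, pd2_comm hf i j, eq_comm]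

end CosseratFields

theorem stmt18_general
    (Ω : Set E2) (hΩo : IsOpen Ω)
    (lam : E2 → ℝ) (hlamsm : ContDiffOn ℝ 2 lam Ω) (hlampos : ∀ x ∈ Ω, 0 < lam x)
    (phi : E2 → E2) (hphism : ContDiffOn ℝ 2 phi Ω)
    (hconf : ∀ x ∈ Ω, ∀ i j : Fin 2,
      (∑ k : Fin 2, fderiv ℝ phi x (Pi.single i 1) k * fderiv ℝ phi x (Pi.single j 1) k) =
        if i = j then lam x else 0) :
    ∀ x ∈ Ω,
      (∀ i j : Fin 2,
        dot3 (pdv i (y0conf phi) x) (pdv j (y0conf phi) x) =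
          Gconf lam x i.castSucc j.castSucc) ∧
      (∀ i j : Fin 2,
        dot3 (pdv i (y0conf phi) x) (pdv j (b0conf lam) x) +
          dot3 (pdv j (y0conf phi) x) (pdv i (b0conf lam) x) = 0) ∧
      (∀ i : Fin 2,
        dot3 (Qcol (y0conf phi) (b0conf lam) x i.castSucc) (d0conf lam phi x) =
          - dot3 (pdv i (b0conf lam) x) (b0conf lam x)) ∧
      dot3 (Qcol (y0conf phi) (b0conf lam) x 2) (d0conf lam phi x) = 0 ∧
      (∀ i j : Fin 2,
        dot3 (pdv i (b0conf lam) x) (pdv j (b0conf lam) x) =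
          Real.exp (2 * flog lam x) * (pd2 i (flog lam) x * pd2 j (flog lam) x)) ∧
      (∀ i j : Fin 2,
        dot3 (pdv i (y0conf phi) x) (pdv j (d0conf lam phi) x) =
          dot3 (pdv j (y0conf phi) x) (pdv i (d0conf lam phi) x)) ∧
      (∀ i j : Fin 2,
        dot3 (pdv i (y0conf phi) x) (pdv j (d0conf lam phi) x) =
          -(Real.exp (2 * flog lam x)) *
            (pd2 i (fun y => pd2 j (flog lam) y) x +
              ((pd2 0 (flog lam) x) ^ 2 + (pd2 1 (flog lam) x) ^ 2) *
                (if i = j then 1 else 0))) ∧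
      (∀ i j : Fin 2,
        (dot3 (pdv i (y0conf phi) x) (pdv j (d0conf lam phi) x) +
            dot3 (pdv j (y0conf phi) x) (pdv i (d0conf lam phi) x)) / 2 +
          dot3 (pdv i (b0conf lam) x) (pdv j (b0conf lam) x) =
        -(Real.exp (2 * flog lam x)) *
          (pd2 i (fun y => pd2 j (flog lam) y) x -
            pd2 i (flog lam) x * pd2 j (flog lam) x +
            ((pd2 0 (flog lam) x) ^ 2 + (pd2 1 (flog lam) x) ^ 2) *
              (if i = j then 1 else 0))) := by
  intro x hx
  have hnhds : Ω ∈ 𝓝 x := hΩo.mem_nhds hx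
  have hphi : ContDiffAt ℝ 2 phi x := hphism.contDiffAt hnhds
  have hphid : DifferentiableAt ℝ phi x := hphi.differentiableAt two_ne_zero
  have hlam : ContDiffAt ℝ 2 lam x := hlamsm.contDiffAt hnhds
  have hlamd : DifferentiableAt ℝ lam x := hlam.differentiableAt two_ne_zero
  have hpos : 0 < lam x := hlampos x hx
  have hf : ContDiffAt ℝ 2 (flog lam) x := contDiffAt_flog hlam hpos
  have hy0 : ∀ᶠ y in 𝓝 x, IsConformalAlong dot3L stdFrame (flog lam) (y0conf phi) y :=
    mem_of_superset hnhds fun y hy => isConformalAlong_y0conf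
      ((hphism.contDiffAt (hΩo.mem_nhds hy)).differentiableAt two_ne_zero)
      (hlampos y hy) (hconf y hy)
  have hyd := dot3_pdv_y0conf_pdv_d0conf hphi hf hy0
  have hsymm := dot3_pdv_y0conf_pdv_d0conf_comm hphi hf hy0
  have hbb := dot3_pdv_b0conf_pdv_b0conf hlamd hpos
  have hyb := dot3_pdv_y0conf_pdv_b0conf hphid hlamd hpos
  refine ⟨fun i j => ?_, fun i j => ?_, fun i => ?_, dot3_b0conf_d0conf hphid, hbb, hsymm,
    hyd, fun i j => ?_⟩
  · rw [pdv_y0conf hphid, pdv_y0conf hphid, dot3_planeInclusion, hconf x hx, Gconf]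
    simp only [Fin.castSucc_inj]
  · rw [hyb, hyb, add_zero]
  · rw [Qcol_castSucc, dot3_pdv_y0conf_d0conf hy0.self_of_nhds, dot3_pdv_b0conf hlamd hpos]
  · rw [← hsymm i j, hyd, hbb]
    ring

/-- For `G = λ Id₃` and a conformal immersion `φ` with `(∇φ)ᵀ∇φ = λ Id₂`:
`y₀ = (φ,0)` immerses `G₂ₓ₂` and satisfies (sym0) with `b₀ = √λ e₃`;
`d₀ = -(∂₁f ∂₁y₀ + ∂₂f ∂₂y₀)`; `(∇b₀)ᵀ∇b₀ = e^{2f} ∇f ⊗ ∇f`;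
`(∇y₀)ᵀ∇d₀` is symmetric and equals `-e^{2f}(∇²f + |∇f|² Id₂)`; hence
`sym((∇y₀)ᵀ∇d₀) + (∇b₀)ᵀ∇b₀ = -e^{2f}(∇²f - ∇f ⊗ ∇f + |∇f|² Id₂)`. -/
theorem stmt18
    (Ω : Set E2) (hΩo : IsOpen Ω) (hΩb : Bornology.IsBounded Ω)
    (hΩsc : SimplyConnectedSpace ↥Ω)
    (lam : E2 → ℝ) (hlamsm : ContDiffOn ℝ (⊤ : ℕ∞) lam (closure Ω))
    (hlampos : ∀ x ∈ closure Ω, 0 < lam x)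
    (phi : E2 → E2) (hphism : ContDiffOn ℝ (⊤ : ℕ∞) phi (closure Ω))
    (hconf : ∀ x ∈ Ω, ∀ i j : Fin 2,
      (∑ k : Fin 2, fderiv ℝ phi x (Pi.single i 1) k * fderiv ℝ phi x (Pi.single j 1) k) =
        if i = j then lam x else 0) :
    ∀ x ∈ Ω,
      (∀ i j : Fin 2,
        dot3 (pdv i (y0conf phi) x) (pdv j (y0conf phi) x) =
          Gconf lam x i.castSucc j.castSucc) ∧
      (∀ i j : Fin 2,
        dot3 (pdv i (y0conf phi) x) (pdv j (b0conf lam) x) +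
          dot3 (pdv j (y0conf phi) x) (pdv i (b0conf lam) x) = 0) ∧
      (∀ i : Fin 2,
        dot3 (Qcol (y0conf phi) (b0conf lam) x i.castSucc) (d0conf lam phi x) =
          - dot3 (pdv i (b0conf lam) x) (b0conf lam x)) ∧
      dot3 (Qcol (y0conf phi) (b0conf lam) x 2) (d0conf lam phi x) = 0 ∧
      (∀ i j : Fin 2,
        dot3 (pdv i (b0conf lam) x) (pdv j (b0conf lam) x) =
          Real.exp (2 * flog lam x) * (pd2 i (flog lam) x * pd2 j (flog lam) x)) ∧
      (∀ i j : Fin 2,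
        dot3 (pdv i (y0conf phi) x) (pdv j (d0conf lam phi) x) =
          dot3 (pdv j (y0conf phi) x) (pdv i (d0conf lam phi) x)) ∧
      (∀ i j : Fin 2,
        dot3 (pdv i (y0conf phi) x) (pdv j (d0conf lam phi) x) =
          -(Real.exp (2 * flog lam x)) *
            (pd2 i (fun y => pd2 j (flog lam) y) x +
              ((pd2 0 (flog lam) x) ^ 2 + (pd2 1 (flog lam) x) ^ 2) *
                (if i = j then 1 else 0))) ∧
      (∀ i j : Fin 2,
        (dot3 (pdv i (y0conf phi) x) (pdv j (d0conf lam phi) x) +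
            dot3 (pdv j (y0conf phi) x) (pdv i (d0conf lam phi) x)) / 2 +
          dot3 (pdv i (b0conf lam) x) (pdv j (b0conf lam) x) =
        -(Real.exp (2 * flog lam x)) *
          (pd2 i (fun y => pd2 j (flog lam) y) x -
            pd2 i (flog lam) x * pd2 j (flog lam) x +
            ((pd2 0 (flog lam) x) ^ 2 + (pd2 1 (flog lam) x) ^ 2) *
              (if i = j then 1 else 0))) := by
  exact stmt18_general Ω hΩo lam (contDiffOn_infty.1 (hlamsm.mono subset_closure) 2)
    (fun x hx => hlampos x (subset_closure hx)) phi
    (contDiffOn_infty.1 (hphism.mono subset_closure) 2) hconf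
end
end
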